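/- For every t ≥ 0 the following equalities and inclusion of σ-algebras hold up to P-negligible sets: 𝓕_t^{K−B} ∨ 𝓕_t^{K'} = 𝓕_t^B ∨ 𝓕_t^K = 𝓕_t^B ∨ σ(K(t)) = 𝓕_t^B ∨ σ(K'(t)), and 𝓕_t^X ∨ σ(K(t)) ∨ σ(K'(t)) ⊆ 𝓕_t^B ∨ 𝓕_t^K. -/

import Mathlib

open MeasureTheory ProbabilityTheory Set Filter Topology
open scoped Classical

noncomputable section

/-- The σ-algebra generated by a process `Y` up to time `t` (over times in `[0, t]`),
i.e. `σ(Y u : 0 ≤ u ≤ t)`. -/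
def natSigma {Ω E : Type*} [MeasurableSpace E] (Y : ℝ → Ω → E) (t : ℝ) :
    MeasurableSpace Ω :=
  ⨆ u : Set.Icc (0 : ℝ) t, MeasurableSpace.comap (Y u) inferInstance

/-- The σ-algebra generated by the whole (nonnegative-time) process `Y`. -/
def procSigma {Ω E : Type*} [MeasurableSpace E] (Y : ℝ → Ω → E) :
    MeasurableSpace Ω :=
  ⨆ u : Set.Ici (0 : ℝ), MeasurableSpace.comap (Y u) inferInstance

/-- `B` is a standard one-dimensional Brownian motion (with `B 0 = 0`) under `P`:
measurable, a.s. starting at `0` and continuous on `[0, ∞)`, with Gaussian increments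
`B t - B s ~ N(0, t - s)` that are independent of the past. -/
structure IsBrownianMotion {Ω : Type*} [MeasurableSpace Ω] (P : Measure Ω)
    (B : ℝ → Ω → ℝ) : Prop where
  measurable : ∀ t : ℝ, Measurable (B t)
  init : ∀ᵐ ω ∂P, B 0 ω = 0
  cont : ∀ᵐ ω ∂P, ContinuousOn (fun t => B t ω) (Set.Ici 0)
  incr_law : ∀ s t : ℝ, 0 ≤ s → s ≤ t →
    P.map (fun ω => B t ω - B s ω) = gaussianReal 0 (Real.toNNReal (t - s))
  incr_indep : ∀ s t : ℝ, 0 ≤ s → s ≤ t →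
    Indep (MeasurableSpace.comap (fun ω => B t ω - B s ω) inferInstance)
      (natSigma B s) P

/-- `W` is a standard `n`-dimensional Brownian motion started at the origin:
its coordinate processes are independent standard one-dimensional Brownian motions. -/
def IsBrownianMotionND {Ω : Type*} [MeasurableSpace Ω] (P : Measure Ω) {n : ℕ}
    (W : ℝ → Ω → EuclideanSpace ℝ (Fin n)) : Prop :=
  (∀ i : Fin n, IsBrownianMotion P (fun t ω => W t ω i)) ∧
  iIndep (fun i : Fin n => procSigma (fun t ω => W t ω i)) P

/-- The least concave majorant on `[0, ∞)` of a function `f : ℝ → ℝ`: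
`t ↦ inf { c t | c concave on [0,∞) and c ≥ f on [0,∞) }`. -/
def concaveMajorant (f : ℝ → ℝ) (t : ℝ) : ℝ :=
  sInf {y | ∃ c : ℝ → ℝ, ConcaveOn ℝ (Set.Ici 0) c ∧ (∀ u, 0 ≤ u → f u ≤ c u) ∧ y = c t}

/-- Right-hand derivative. -/
def rightDeriv (f : ℝ → ℝ) (t : ℝ) : ℝ := derivWithin f (Set.Ioi t) t

/-- `D(t)`: the first vertex (contact point of the concave majorant) at or after time `t`. -/
def firstVertex (f : ℝ → ℝ) (t : ℝ) : ℝ :=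
  sInf {u | t ≤ u ∧ concaveMajorant f u = f u}

/-- The concave majorant process `K` of `B`. -/
def Kproc {Ω : Type*} (B : ℝ → Ω → ℝ) (t : ℝ) (ω : Ω) : ℝ :=
  concaveMajorant (fun u => B u ω) t

/-- The process `X = 2K - B`. -/
def Xproc {Ω : Type*} (B : ℝ → Ω → ℝ) (t : ℝ) (ω : Ω) : ℝ :=
  2 * Kproc B t ω - B t ω

/-- The right-hand slope process `K'` of the concave majorant. -/
def Kslope {Ω : Type*} (B : ℝ → Ω → ℝ) (t : ℝ) (ω : Ω) : ℝ :=
  rightDeriv (fun u => Kproc B u ω) t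

/-- The process `D` of first vertices: `D(t) = inf {u ≥ t : K u = B u}`. -/
def Dproc {Ω : Type*} (B : ℝ → Ω → ℝ) (t : ℝ) (ω : Ω) : ℝ :=
  firstVertex (fun u => B u ω) t

/-- A process `Y` is Markov (w.r.t. its natural filtration): for all `0 ≤ s ≤ t`,
`σ(Y t)` is conditionally independent of `σ(Y u : 0 ≤ u ≤ s)` given `σ(Y s)`. -/
def IsMarkov {Ω E : Type*} [mΩ : MeasurableSpace Ω] [StandardBorelSpace Ω]
    [MeasurableSpace E] (P : Measure Ω) [IsFiniteMeasure P] (Y : ℝ → Ω → E) : Prop :=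
  ∀ s t : ℝ, 0 ≤ s → s ≤ t →
    ∃ hs : MeasurableSpace.comap (Y s) inferInstance ≤ mΩ,
      CondIndep (MeasurableSpace.comap (Y s) inferInstance)
        (MeasurableSpace.comap (Y t) inferInstance)
        (natSigma Y s) hs P

/-- `m₁ ⊆ m₂` up to `P`-negligible sets: every `m₁`-measurable set agrees with some
`m₂`-measurable set up to a `P`-null symmetric difference. -/
def SigmaLeModNull {Ω : Type*} [MeasurableSpace Ω] (P : Measure Ω)
    (m₁ m₂ : MeasurableSpace Ω) : Prop :=
  ∀ A : Set Ω, MeasurableSet[m₁] A →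
    ∃ A' : Set Ω, MeasurableSet[m₂] A' ∧ P (symmDiff A A') = 0

/-- Equality of σ-algebras up to `P`-negligible sets. -/
def SigmaEqModNull {Ω : Type*} [mΩ : MeasurableSpace Ω] (P : Measure Ω)
    (m₁ m₂ : MeasurableSpace Ω) : Prop :=
  @SigmaLeModNull Ω mΩ P m₁ m₂ ∧ @SigmaLeModNull Ω mΩ P m₂ m₁

/-!
Up to null sets, `K` and its slope `K'` are recovered from one another and from `B` on `[0, t]`.

* Each path of `B` is a.s. below an affine function (Doob's inequality on `[0, 4 ^ n]` and
  Borel–Cantelli), so `K` is a genuine infimum. Continuity of `B` at `0` forces `K 0 = B 0 = 0`.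
* At a fixed time the difference quotients of `B` to the right are a.s. unbounded. Hence at a fixed
  `s > 0` the path is strictly below `K`, so that `K` is affine near `s` and `K'(s)` is a two-sided
  derivative, measurable with respect to the past of `K`.
* For `s ≤ t`, `K(s) < r` iff an affine function is above `B` on `[0, t]`, above `K` at `t` and
  below `r` at `s`: `B` on `[0, t]` and `K(t)` determine `K` on `[0, t]`.
* The tangent of `K` at `t > 0` touches the path at a time `u < t`, or at `0`; thus
  `K(t) = max {B(u) + K'(t) (t - u) | u ∈ [0, t]}`.
* `K` is the integral of its slope, a limit of Riemann sums.
-/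

/-! ### The least concave majorant of a path -/

/-- `f` lies below some affine function on `[0, ∞)`. Every concave function on `[0, ∞)` is bounded
by an affine one, so this says that `f` has a concave majorant, and hence that the infimum defining
`concaveMajorant f` is not the junk value `sInf ∅ = 0`. -/
def HasAffineMajorant (f : ℝ → ℝ) : Prop :=
  ∃ a b : ℝ, ∀ u, 0 ≤ u → f u ≤ a + b * u

theorem concaveOn_affine (p q : ℝ) {S : Set ℝ} (hS : Convex ℝ S) :
    ConcaveOn ℝ S fun u => p + q * u :=
  (concaveOn_const p hS).add ((LinearMap.mulLeft ℝ q).concaveOn hS)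

theorem concaveOn_sub_affine (p q : ℝ) {S : Set ℝ} {k : ℝ → ℝ} (hk : ConcaveOn ℝ S k) :
    ConcaveOn ℝ S fun u => k u - (p + q * u) := by
  refine (hk.add (concaveOn_affine (-p) (-q) hk.1)).congr fun u _ => ?_
  simp only [Pi.add_apply]
  ring

theorem concaveMajorant_le {f c : ℝ → ℝ} (hc : ConcaveOn ℝ (Ici 0) c)
    (hfc : ∀ u, 0 ≤ u → f u ≤ c u) {t : ℝ} (ht : 0 ≤ t) : concaveMajorant f t ≤ c t := by
  refine csInf_le ⟨f t, ?_⟩ ⟨c, hc, hfc, rfl⟩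
  rintro _ ⟨d, -, hfd, rfl⟩
  exact hfd t ht

theorem concaveMajorant_le_affine {f : ℝ → ℝ} {p q : ℝ} (hf : ∀ u, 0 ≤ u → f u ≤ p + q * u)
    {t : ℝ} (ht : 0 ≤ t) : concaveMajorant f t ≤ p + q * t :=
  concaveMajorant_le (concaveOn_affine p q (convex_Ici 0)) hf ht

namespace HasAffineMajorant

variable {f : ℝ → ℝ} {a b p q r s t : ℝ}

theorem le_concaveMajorant_of_forall (hf : HasAffineMajorant f)
    (h : ∀ c : ℝ → ℝ, ConcaveOn ℝ (Ici 0) c → (∀ u, 0 ≤ u → f u ≤ c u) → r ≤ c t) :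
    r ≤ concaveMajorant f t := by
  obtain ⟨p, q, hpq⟩ := hf
  refine le_csInf ⟨_, _, concaveOn_affine p q (convex_Ici 0), hpq, rfl⟩ ?_
  rintro _ ⟨c, hc, hfc, rfl⟩
  exact h c hc hfc

theorem le_concaveMajorant (hf : HasAffineMajorant f) (ht : 0 ≤ t) : f t ≤ concaveMajorant f t :=
  hf.le_concaveMajorant_of_forall fun _ _ hfc => hfc t ht

theorem concaveOn_concaveMajorant (hf : HasAffineMajorant f) :
    ConcaveOn ℝ (Ici 0) (concaveMajorant f) := by
  refine ⟨convex_Ici 0, fun x hx y hy α β hα hβ hαβ => ?_⟩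
  refine hf.le_concaveMajorant_of_forall fun c hc hfc => (hc.2 hx hy hα hβ hαβ).trans' ?_
  simp only [smul_eq_mul]
  gcongr
  exacts [concaveMajorant_le hc hfc hx, concaveMajorant_le hc hfc hy]

theorem exists_affine_majorant_near_zero (hf : HasAffineMajorant f)
    (hcont : ContinuousWithinAt f (Ici 0) 0) (hr : f 0 < r) :
    ∃ q, ∀ u, 0 ≤ u → concaveMajorant f u ≤ r + q * u := by
  obtain ⟨α, β, hαβ⟩ := hf
  obtain ⟨b, hb, hfr⟩ := mem_nhdsGE_iff_exists_Ico_subset.1 (hcont.eventually (gt_mem_nhds hr))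
  replace hb : 0 < b := hb
  refine ⟨|β| + |α - r| / b, fun u hu => concaveMajorant_le_affine (fun v hv => ?_) hu⟩
  obtain hvb | hbv := lt_or_ge v b
  · have hfv : f v < r := hfr ⟨hv, hvb⟩
    have : 0 ≤ (|β| + |α - r| / b) * v := by positivity
    linarith
  · calc f v ≤ α + β * v := hαβ v hv
      _ = r + β * v + (α - r) * 1 := by ring
      _ ≤ r + |β| * v + |α - r| * (v / b) := by
          gcongr
          exacts [le_abs_self β, le_abs_self _, (one_le_div hb).2 hbv]
      _ = r + (|β| + |α - r| / b) * v := by ring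

theorem concaveMajorant_zero (hf : HasAffineMajorant f) (hcont : ContinuousWithinAt f (Ici 0) 0) :
    concaveMajorant f 0 = f 0 := by
  refine le_antisymm (le_of_forall_gt_imp_ge_of_dense fun r hr => ?_) (hf.le_concaveMajorant le_rfl)
  obtain ⟨q, hq⟩ := hf.exists_affine_majorant_near_zero hcont hr
  simpa using hq 0 le_rfl

theorem continuousWithinAt_concaveMajorant_zero (hf : HasAffineMajorant f)
    (hcont : ContinuousWithinAt f (Ici 0) 0) :
    ContinuousWithinAt (concaveMajorant f) (Ici 0) 0 := by
  rw [ContinuousWithinAt, hf.concaveMajorant_zero hcont]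
  refine tendsto_order.2 ⟨fun r hr => ?_, fun r hr => ?_⟩
  · filter_upwards [hcont.eventually (lt_mem_nhds hr), self_mem_nhdsWithin] with u hu hu0
    exact hu.trans_le (hf.le_concaveMajorant hu0)
  · obtain ⟨r', hr', hr'r⟩ := exists_between hr
    obtain ⟨q, hq⟩ := hf.exists_affine_majorant_near_zero hcont hr'
    have hlim : Tendsto (fun u => r' + q * u) (𝓝[≥] 0) (𝓝 (r' + q * 0)) :=
      (Continuous.tendsto (by fun_prop) 0).mono_left nhdsWithin_le_nhds
    filter_upwards [hlim.eventually (gt_mem_nhds (by simpa using hr'r)), self_mem_nhdsWithin]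
      with u hu hu0 using (hq u hu0).trans_lt hu

/-- If the majorant exceeded the line somewhere in `[a, b]`, concavity would force it below the line
outside `[a, b]`; the line would then dominate `f` everywhere, hence the majorant too. -/
theorem concaveMajorant_le_affine_of_mem_Icc (hf : HasAffineMajorant f) (ha : 0 ≤ a)
    (hfab : ∀ u ∈ Icc a b, f u ≤ p + q * u) (hka : concaveMajorant f a ≤ p + q * a)
    (hkb : concaveMajorant f b ≤ p + q * b) {z : ℝ} (hz : z ∈ Icc a b) :
    concaveMajorant f z ≤ p + q * z := by
  by_contra! hlt
  have hdiff := concaveOn_sub_affine p q hf.concaveOn_concaveMajorant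
  have houtside : ∀ u, 0 ≤ u → u ∉ Icc a b → concaveMajorant f u ≤ p + q * u := by
    intro u hu huab
    by_contra! hu_lt
    have hz0 := ha.trans hz.1
    rcases lt_or_ge u a with hua | hau
    · have := hdiff.min_le_of_mem_Icc hu hz0 ⟨hua.le, hz.1⟩
      rcases min_le_iff.1 this with h | h <;> linarith
    · have := hdiff.min_le_of_mem_Icc hz0 hu ⟨hz.2, (not_le.1 fun h => huab ⟨hau, h⟩).le⟩
      rcases min_le_iff.1 this with h | h <;> linarith
  refine hlt.not_ge (concaveMajorant_le_affine (fun u hu => ?_) (ha.trans hz.1))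
  by_cases huab : u ∈ Icc a b
  exacts [hfab u huab, (hf.le_concaveMajorant hu).trans (houtside u hu huab)]

end HasAffineMajorant

/-! ### Tangents of concave functions -/

theorem le_tangent_of_concaveOn {S : Set ℝ} {k : ℝ → ℝ} (hk : ConcaveOn ℝ S k) {s u : ℝ}
    (hs : s ∈ interior S) (hu : u ∈ S) : k u ≤ k s + rightDeriv k s * (u - s) := by
  have hconv : ConvexOn ℝ S (-k) := hk.neg
  have hneg : derivWithin (-k) (Ioi s) s = -rightDeriv k s := derivWithin.neg
  rcases lt_trichotomy u s with hus | rfl | hsu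
  · have hslope := (hconv.slope_le_leftDeriv_of_mem_interior hu hs hus).trans
      (hconv.leftDeriv_le_rightDeriv_of_mem_interior hs)
    rw [hneg, slope_def_field, div_le_iff₀ (by linarith)] at hslope
    simp only [Pi.neg_apply] at hslope
    linarith
  · simp
  · have hslope := hconv.rightDeriv_le_slope_of_mem_interior hs hu hsu
    rw [hneg, slope_def_field, le_div_iff₀ (by linarith)] at hslope
    simp only [Pi.neg_apply] at hslope
    linarith

theorem sum_rightDeriv_mul_le {k : ℝ → ℝ} (hk : ConcaveOn ℝ (Ici 0) k) {δ : ℝ} (hδ : 0 < δ)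
    (n : ℕ) : ∑ i ∈ Finset.range n, rightDeriv k ((i + 1 : ℕ) * δ) * δ ≤ k (n * δ) - k 0 := by
  calc ∑ i ∈ Finset.range n, rightDeriv k ((i + 1 : ℕ) * δ) * δ
      ≤ ∑ i ∈ Finset.range n, (k ((i + 1 : ℕ) * δ) - k (i * δ)) := by
        refine Finset.sum_le_sum fun i _ => ?_
        have hs : ((i + 1 : ℕ) * δ : ℝ) ∈ interior (Ici 0) := by
          rw [interior_Ici, mem_Ioi]; positivity
        have := le_tangent_of_concaveOn hk hs (u := i * δ) (mem_Ici.2 (by positivity))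
        push_cast at this ⊢
        linarith
    _ = k (n * δ) - k 0 := by
        simpa using Finset.sum_range_sub (fun i : ℕ => k (i * δ)) n

theorem le_sum_rightDeriv_mul {k : ℝ → ℝ} (hk : ConcaveOn ℝ (Ici 0) k) {δ : ℝ} (hδ : 0 < δ)
    (n : ℕ) : k ((n + 1 : ℕ) * δ) - k δ ≤
      ∑ i ∈ Finset.range n, rightDeriv k ((i + 1 : ℕ) * δ) * δ := by
  calc k ((n + 1 : ℕ) * δ) - k δ
      = ∑ i ∈ Finset.range n, (k ((i + 1 + 1 : ℕ) * δ) - k ((i + 1 : ℕ) * δ)) := by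
        simpa using (Finset.sum_range_sub (fun i : ℕ => k ((i + 1 : ℕ) * δ)) n).symm
    _ ≤ _ := by
        refine Finset.sum_le_sum fun i _ => ?_
        have hs : ((i + 1 : ℕ) * δ : ℝ) ∈ interior (Ici 0) := by
          rw [interior_Ici, mem_Ioi]; positivity
        have := le_tangent_of_concaveOn hk hs (u := (i + 1 + 1 : ℕ) * δ) (mem_Ici.2 (by positivity))
        push_cast at this ⊢
        linarith

theorem tendsto_sum_rightDeriv {k : ℝ → ℝ} (hk : ConcaveOn ℝ (Ici 0) k)
    (hcont : ContinuousWithinAt k (Ici 0) 0) {s : ℝ} (hs : 0 < s) :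
    Tendsto (fun n : ℕ => ∑ i ∈ Finset.range (n + 1),
      rightDeriv k ((i + 1 : ℕ) * (s / (n + 1 : ℕ))) * (s / (n + 1 : ℕ))) atTop
      (𝓝 (k s - k 0)) := by
  have hmesh_pos : ∀ n : ℕ, 0 < s / (n + 1 : ℕ) := fun n => by positivity
  have hmesh_mul : ∀ n : ℕ, (n + 1 : ℕ) * (s / (n + 1 : ℕ)) = s := fun n => by field_simp
  have hmesh : Tendsto (fun n : ℕ => s / (n + 1 : ℕ)) atTop (𝓝 0) :=
    (tendsto_const_div_atTop_nhds_zero_nat s).comp (tendsto_add_atTop_nat 1)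
  have hk0 : Tendsto (fun n : ℕ => k (s / (n + 1 : ℕ))) atTop (𝓝 (k 0)) :=
    hcont.tendsto.comp (tendsto_nhdsWithin_iff.2 ⟨hmesh, .of_forall fun n => (hmesh_pos n).le⟩)
  have hlower : Tendsto (fun n : ℕ =>
      k s - k (s / (n + 1 : ℕ)) + rightDeriv k s * (s / (n + 1 : ℕ))) atTop (𝓝 (k s - k 0)) := by
    simpa using (tendsto_const_nhds (x := k s).sub hk0).add (hmesh.const_mul (rightDeriv k s))
  refine tendsto_of_tendsto_of_tendsto_of_le_of_le hlower tendsto_const_nhds (fun n => ?_)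
    fun n => ?_
  · have := le_sum_rightDeriv_mul hk (hmesh_pos n) n
    rw [hmesh_mul] at this
    simp only [Finset.sum_range_succ, hmesh_mul]
    gcongr
  · simpa only [hmesh_mul] using sum_rightDeriv_mul_le hk (hmesh_pos n) (n + 1)

/-! ### Local structure of the majorant -/

namespace HasAffineMajorant

variable {f : ℝ → ℝ} {a b r s t : ℝ}

theorem exists_affine_majorant_lt (hf : HasAffineMajorant f)
    (hcont : ContinuousWithinAt f (Ici 0) 0) (hs : 0 ≤ s) (hr : concaveMajorant f s < r) :
    ∃ p q, p + q * s < r ∧ ∀ u, 0 ≤ u → concaveMajorant f u ≤ p + q * u := by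
  rcases hs.eq_or_lt with rfl | hs
  · rw [hf.concaveMajorant_zero hcont] at hr
    obtain ⟨r', hr', hr'r⟩ := exists_between hr
    obtain ⟨q, hq⟩ := hf.exists_affine_majorant_near_zero hcont hr'
    exact ⟨r', q, by simpa using hr'r, hq⟩
  · set k := concaveMajorant f
    refine ⟨k s - rightDeriv k s * s, rightDeriv k s, by linarith, fun u hu => ?_⟩
    have := le_tangent_of_concaveOn hf.concaveOn_concaveMajorant (by rwa [interior_Ici]) hu
    linarith

theorem concaveMajorant_lt_iff (hf : HasAffineMajorant f)
    (hcont : ContinuousWithinAt f (Ici 0) 0) (hs : 0 ≤ s) (hst : s ≤ t) :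
    concaveMajorant f s < r ↔ ∃ p q : ℚ, (p : ℝ) + q * s < r ∧
      (∀ u ∈ Icc 0 t, f u ≤ p + q * u) ∧ concaveMajorant f t ≤ p + q * t := by
  constructor
  · intro hr
    obtain ⟨p, q, hpq, hk⟩ := hf.exists_affine_majorant_lt hcont hs hr
    obtain ⟨p', hpp', hp'⟩ := exists_rat_btwn (show p < r - q * s by linarith)
    obtain ⟨q', hqq', hq'⟩ := exists_rat_btwn
      (show q < q + (r - q * s - p') / (s + 1) from lt_add_of_pos_right _ (by
        have : 0 < r - q * s - p' := by linarith
        positivity))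
    have hk' : ∀ u, 0 ≤ u → concaveMajorant f u ≤ p' + q' * u := fun u hu => (hk u hu).trans (by
      gcongr)
    refine ⟨p', q', ?_, fun u hu => (hf.le_concaveMajorant hu.1).trans (hk' u hu.1),
      hk' t (hs.trans hst)⟩
    have hlt : (q' - q) * (s + 1) < r - q * s - p' := by
      rw [← lt_div_iff₀ (by positivity)]
      linarith
    linarith
  · rintro ⟨p, q, hr, hfpq, hkt⟩
    refine (hf.concaveMajorant_le_affine_of_mem_Icc le_rfl hfpq ?_ hkt ⟨hs, hst⟩).trans_lt hr
    rw [hf.concaveMajorant_zero hcont]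
    exact hfpq 0 ⟨le_rfl, hs.trans hst⟩

theorem exists_concaveMajorant_eqOn_affine (hf : HasAffineMajorant f) (ha : 0 ≤ a) (hab : a < b)
    (hfr : ∀ u ∈ Icc a b, f u ≤ r) (hra : r ≤ concaveMajorant f a)
    (hrb : r ≤ concaveMajorant f b) :
    ∃ p q, EqOn (concaveMajorant f) (fun u => p + q * u) (Icc a b) := by
  set k := concaveMajorant f
  set q := (k b - k a) / (b - a)
  have hka : k a - q * a + q * a = k a := by ring
  have hkb : k a - q * a + q * b = k b := by
    have : q * (b - a) = k b - k a := div_mul_cancel₀ _ (sub_pos.2 hab).ne'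
    linarith
  refine ⟨k a - q * a, q, fun u hu => le_antisymm ?_ ?_⟩
  · refine hf.concaveMajorant_le_affine_of_mem_Icc ha (fun v hv => (hfr v hv).trans ?_) hka.ge
      hkb.ge hu
    have := (concaveOn_affine (k a - q * a) q convex_univ).min_le_of_mem_Icc (mem_univ a)
      (mem_univ b) hv
    rw [hka, hkb] at this
    exact (le_min hra hrb).trans this
  · have := (concaveOn_sub_affine (k a - q * a) q hf.concaveOn_concaveMajorant).min_le_of_mem_Icc
      (mem_Ici.2 ha) (mem_Ici.2 (ha.trans hab.le)) hu
    simpa only [hka, hkb, k, sub_self, min_self, sub_nonneg] using this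

/-- Near a point where `f` lies strictly below its majorant, the majorant is affine. -/
theorem hasDerivAt_concaveMajorant (hf : HasAffineMajorant f) (hcont : ContinuousAt f t)
    (ht : 0 < t) (hlt : f t < concaveMajorant f t) :
    HasDerivAt (concaveMajorant f) (rightDeriv (concaveMajorant f) t) t := by
  suffices DifferentiableAt ℝ (concaveMajorant f) t from
    this.hasDerivAt.congr_deriv (this.hasDerivAt.hasDerivWithinAt.derivWithin
      (uniqueDiffWithinAt_Ioi t)).symm
  obtain ⟨r, hfr, hrk⟩ := exists_between hlt
  have hkcont : ContinuousAt (concaveMajorant f) t :=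
    hf.concaveOn_concaveMajorant.continuousOn_interior.continuousAt
      (by rw [interior_Ici]; exact Ioi_mem_nhds ht)
  obtain ⟨ε, hε, hball⟩ := Metric.nhds_basis_closedBall.eventually_iff.1 <|
    (hcont.eventually (gt_mem_nhds hfr)).and <| (hkcont.eventually (lt_mem_nhds hrk)).and <|
      Ioi_mem_nhds ht
  rw [Real.closedBall_eq_Icc] at hball
  have hleft := hball (left_mem_Icc.2 (by linarith))
  have hright := hball (right_mem_Icc.2 (by linarith))
  obtain ⟨p, q, hpq⟩ := hf.exists_concaveMajorant_eqOn_affine (le_of_lt hleft.2.2) (by linarith)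
    (fun u hu => (hball hu).1.le) hleft.2.1.le hright.2.1.le
  have haffine : DifferentiableAt ℝ (fun u => p + q * u) t := by fun_prop
  exact haffine.congr_of_eventuallyEq
    (hpq.eventuallyEq_of_mem (Icc_mem_nhds (by linarith) (by linarith)))

/-- If the supremum were smaller than the majorant at `t`, the line through the majorant at `t`
could be made steeper and still dominate `f` on `[0, t]`. -/
theorem isLUB_concaveMajorant (hf : HasAffineMajorant f) (hcont : ContinuousWithinAt f (Ici 0) 0)
    (ht : 0 < t) (hderiv : HasDerivAt (concaveMajorant f) (rightDeriv (concaveMajorant f) t) t) :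
    IsLUB ((fun u => f u + rightDeriv (concaveMajorant f) t * (t - u)) '' Icc 0 t)
      (concaveMajorant f t) := by
  set k := concaveMajorant f
  set m := rightDeriv k t
  constructor
  · rintro _ ⟨u, hu, rfl⟩
    have htangent := le_tangent_of_concaveOn hf.concaveOn_concaveMajorant
      (by rwa [interior_Ici]) hu.1
    have := hf.le_concaveMajorant hu.1
    simp only
    linarith
  · intro r hr
    have hfr : ∀ u ∈ Icc 0 t, f u + m * (t - u) ≤ r := fun u hu => hr (mem_image_of_mem _ hu)
    by_contra! hrk
    set e := (k t - r) / t
    have he : 0 < e := div_pos (by linarith) ht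
    have het : e * t = k t - r := div_mul_cancel₀ _ ht.ne'
    have hline : ∀ u ∈ Icc 0 t, k u ≤ r - m * t + (m + e) * u := by
      refine fun u hu => hf.concaveMajorant_le_affine_of_mem_Icc le_rfl (fun v hv => ?_) ?_ ?_ hu
      · have := mul_nonneg he.le hv.1
        linarith [hfr v hv]
      · rw [hf.concaveMajorant_zero hcont]
        linarith [hfr 0 ⟨le_rfl, ht.le⟩]
      · linarith
    have hslope : Tendsto (slope k t) (𝓝[<] t) (𝓝 m) :=
      (hasDerivWithinAt_iff_tendsto_slope' self_notMem_Iio).1 hderiv.hasDerivWithinAt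
    have : m + e ≤ m := ge_of_tendsto hslope <| by
      filter_upwards [Ioo_mem_nhdsLT ht] with u hu
      rw [slope_comm, slope_def_field, le_div_iff₀ (sub_pos.2 hu.2)]
      linarith [hline u (Ioo_subset_Icc_self hu)]
    linarith

end HasAffineMajorant

/-- The difference quotients of `f` to the right of `t` are unbounded above. When `f` has an affine
majorant, only small increments matter: the upper right Dini derivative of `f` at `t` is `+∞`. -/
def Steep (f : ℝ → ℝ) (t : ℝ) : Prop :=
  ∀ M : ℝ, ∃ h, 0 < h ∧ f t + M * h < f (t + h)

namespace Steep

variable {f : ℝ → ℝ} {t : ℝ}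

theorem lt_concaveMajorant (hsteep : Steep f t) (hf : HasAffineMajorant f) (ht : 0 < t) :
    f t < concaveMajorant f t := by
  obtain ⟨h, hpos, hlt⟩ := hsteep (rightDeriv (concaveMajorant f) t)
  have hth : 0 ≤ t + h := by positivity
  have htangent := le_tangent_of_concaveOn (s := t) hf.concaveOn_concaveMajorant
    (by rwa [interior_Ici]) hth
  rw [add_sub_cancel_left] at htangent
  have := hf.le_concaveMajorant hth
  linarith

/-- The value `0` is the junk value of `derivWithin`: the actual right-hand slope is `+∞`. -/
theorem rightDeriv_concaveMajorant_zero (hsteep : Steep f 0) (hf : HasAffineMajorant f)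
    (hcont : ContinuousWithinAt f (Ici 0) 0) : rightDeriv (concaveMajorant f) 0 = 0 := by
  refine derivWithin_zero_of_not_differentiableWithinAt fun hdiff => ?_
  obtain ⟨h, hpos, hlt⟩ := hsteep (rightDeriv (concaveMajorant f) 0)
  have hslope : slope (concaveMajorant f) 0 h ≤ rightDeriv (concaveMajorant f) 0 :=
    hf.concaveOn_concaveMajorant.slope_le_rightDeriv self_mem_Ici hpos.le hpos hdiff
  rw [slope_def_field, div_le_iff₀ (by linarith), hf.concaveMajorant_zero hcont] at hslope
  have := hf.le_concaveMajorant hpos.le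
  rw [zero_add] at hlt
  linarith

end Steep

/-! ### Measurability up to null sets -/

section NullAugment

variable {Ω : Type*} {m m₁ m₂ : MeasurableSpace Ω} [MeasurableSpace Ω] {P : Measure Ω}

/-- `m` augmented by the `P`-null sets, i.e. the sets that differ from a set of `m` by a null set;
it turns inclusions up to negligible sets into inclusions. `m` is not required to lie below the
ambient σ-algebra, and a null set is any set of outer measure zero. -/
abbrev nullAugment (P : Measure Ω) (m : MeasurableSpace Ω) : MeasurableSpace Ω :=
  eventuallyMeasurableSpace m (ae P)

theorem le_nullAugment : m ≤ nullAugment P m :=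
  le_eventuallyMeasurableSpace

theorem le_nullAugment_sup_left : m₁ ≤ nullAugment P (m₁ ⊔ m₂) :=
  le_sup_left.trans le_nullAugment

theorem le_nullAugment_sup_right : m₂ ≤ nullAugment P (m₁ ⊔ m₂) :=
  le_sup_right.trans le_nullAugment

theorem sigmaLeModNull_iff : SigmaLeModNull P m₁ m₂ ↔ m₁ ≤ nullAugment P m₂ := by
  simp only [SigmaLeModNull, measure_symmDiff_eq_zero_iff]
  rfl

theorem measurable_nullAugment_of_tendsto {f : ℕ → Ω → ℝ} {g : Ω → ℝ}
    (hf : ∀ n, Measurable[nullAugment P m] (f n))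
    (hlim : ∀ᵐ ω ∂P, Tendsto (fun n => f n ω) atTop (𝓝 (g ω))) : Measurable[nullAugment P m] g := by
  have hlimsup : Measurable[nullAugment P m] fun ω => limsup (fun n => f n ω) atTop :=
    Measurable.limsup hf
  refine EventuallyMeasurable.congr hlimsup ?_
  filter_upwards [hlim] with ω hω using hω.limsup_eq.symm

theorem measurableSet_nullAugment_forall_le {ι : Type*} [TopologicalSpace ι]
    [TopologicalSpace.SeparableSpace ι] {Y : ι → Ω → ℝ}
    (hY : ∀ i, Measurable[nullAugment P m] (Y i))
    (hcont : ∀ᵐ ω ∂P, Continuous fun i => Y i ω) (c : ℝ) :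
    MeasurableSet[nullAugment P m] {ω | ∀ i, Y i ω ≤ c} := by
  obtain ⟨D, hDcount, hDdense⟩ := TopologicalSpace.exists_countable_dense ι
  have hD : MeasurableSet[nullAugment P m] (⋂ i ∈ D, Y i ⁻¹' Iic c) :=
    MeasurableSet.biInter hDcount fun i _ => hY i measurableSet_Iic
  refine EventuallyMeasurableSet.congr hD (eventuallyEq_set.2 ?_)
  filter_upwards [hcont] with ω hω
  simp only [mem_iInter, mem_preimage, mem_Iic]
  exact ⟨fun h i _ => h i, fun h => hDdense.induction h (isClosed_le hω continuous_const)⟩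

end NullAugment

section NatSigma

variable {Ω E F G : Type*} {m : MeasurableSpace Ω} [MeasurableSpace E] [MeasurableSpace F]
  [MeasurableSpace G] {Y : ℝ → Ω → E} {Z : ℝ → Ω → F} {s t : ℝ}

theorem natSigma_le_iff : natSigma Y t ≤ m ↔ ∀ u ∈ Icc 0 t, Measurable[m] (Y u) := by
  simp only [natSigma, iSup_le_iff, measurable_iff_comap_le, Subtype.forall]

theorem measurable_natSigma (hs : s ∈ Icc 0 t) : Measurable[natSigma Y t] (Y s) :=
  natSigma_le_iff.1 le_rfl s hs

theorem natSigma_mono (Y : ℝ → Ω → E) : Monotone (natSigma Y) := fun _ _ hst =>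
  natSigma_le_iff.2 fun _ hu => measurable_natSigma ⟨hu.1, hu.2.trans hst⟩

theorem natSigma_comp_le {f : E × F → G} (hf : Measurable f) (hY : natSigma Y t ≤ m)
    (hZ : natSigma Z t ≤ m) : natSigma (fun u ω => f (Y u ω, Z u ω)) t ≤ m :=
  natSigma_le_iff.2 fun u hu =>
    hf.comp ((natSigma_le_iff.1 hY u hu).prodMk (natSigma_le_iff.1 hZ u hu))

end NatSigma

/-! ### Generating the majorant and its slope -/

section Generation

variable {Ω : Type*} {m : MeasurableSpace Ω} [MeasurableSpace Ω] {P : Measure Ω}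
  {B : ℝ → Ω → ℝ} {t : ℝ}

theorem Kproc_zero_ae_eq (hcont : ∀ᵐ ω ∂P, ContinuousOn (fun u => B u ω) (Ici 0))
    (hmaj : ∀ᵐ ω ∂P, HasAffineMajorant fun u => B u ω) : Kproc B 0 =ᵐ[P] B 0 := by
  filter_upwards [hcont, hmaj] with ω hcontω hmajω
  exact hmajω.concaveMajorant_zero (hcontω 0 self_mem_Ici)

theorem ae_hasDerivAt_Kproc (hcont : ∀ᵐ ω ∂P, ContinuousOn (fun u => B u ω) (Ici 0))
    (hmaj : ∀ᵐ ω ∂P, HasAffineMajorant fun u => B u ω) (ht : 0 < t)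
    (hsteep : ∀ᵐ ω ∂P, Steep (fun u => B u ω) t) :
    ∀ᵐ ω ∂P, HasDerivAt (fun u => Kproc B u ω) (Kslope B t ω) t := by
  filter_upwards [hcont, hmaj, hsteep] with ω hcontω hmajω hsteepω
  exact hmajω.hasDerivAt_concaveMajorant (hcontω.continuousAt (Ici_mem_nhds ht)) ht
    (hsteepω.lt_concaveMajorant hmajω ht)

theorem natSigma_Kproc_le (hcont : ∀ᵐ ω ∂P, ContinuousOn (fun u => B u ω) (Ici 0))
    (hmaj : ∀ᵐ ω ∂P, HasAffineMajorant fun u => B u ω) (hB : natSigma B t ≤ nullAugment P m)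
    (hKt : MeasurableSpace.comap (Kproc B t) inferInstance ≤ nullAugment P m) :
    natSigma (Kproc B) t ≤ nullAugment P m := by
  refine natSigma_le_iff.2 fun s hs => measurable_of_Iio (mδ := nullAugment P m) fun r => ?_
  have hbelow : ∀ p q : ℝ, MeasurableSet[nullAugment P m]
      {ω | ∀ u : Icc 0 t, B u ω - q * u ≤ p} := fun p q => by
    refine measurableSet_nullAugment_forall_le
      (fun u : Icc 0 t => (natSigma_le_iff.1 hB u u.2).sub_const (q * u)) ?_ p
    filter_upwards [hcont] with ω hω
    exact (hω.mono Icc_subset_Ici_self).domRestrict.sub (by fun_prop)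
  have hset : MeasurableSet[nullAugment P m] (⋃ (p : ℚ) (q : ℚ) (_ : (p : ℝ) + q * s < r),
      {ω | ∀ u : Icc 0 t, B u ω - q * u ≤ p} ∩ Kproc B t ⁻¹' Iic (p + q * t)) :=
    .iUnion fun p => .iUnion fun q => .iUnion fun _ =>
      (hbelow p q).inter (measurable_iff_comap_le.2 hKt measurableSet_Iic)
  refine EventuallyMeasurableSet.congr hset (eventuallyEq_set.2 ?_)
  filter_upwards [hcont, hmaj] with ω hcontω hmajω
  simp only [mem_preimage, mem_Iio, mem_iUnion, mem_inter_iff, mem_ofPred_eq, mem_Iic,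
    Subtype.forall, exists_prop, tsub_le_iff_right]
  exact hmajω.concaveMajorant_lt_iff (hcontω 0 self_mem_Ici) hs.1 hs.2

theorem natSigma_Kslope_le (hcont : ∀ᵐ ω ∂P, ContinuousOn (fun u => B u ω) (Ici 0))
    (hmaj : ∀ᵐ ω ∂P, HasAffineMajorant fun u => B u ω)
    (hsteep : ∀ s ∈ Icc 0 t, ∀ᵐ ω ∂P, Steep (fun u => B u ω) s)
    (hK : natSigma (Kproc B) t ≤ nullAugment P m) : natSigma (Kslope B) t ≤ nullAugment P m := by
  refine natSigma_le_iff.2 fun s hs => ?_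
  rcases hs.1.eq_or_lt with rfl | hs0
  · refine EventuallyMeasurable.congr (f := fun _ => 0) measurable_const ?_
    filter_upwards [hcont, hmaj, hsteep 0 hs] with ω hcontω hmajω hsteepω
    exact hsteepω.rightDeriv_concaveMajorant_zero hmajω (hcontω 0 self_mem_Ici)
  · obtain ⟨v, -, hv, hvs⟩ := exists_seq_strictMono_tendsto' hs0
    have hKs := natSigma_le_iff.1 hK
    refine measurable_nullAugment_of_tendsto
      (f := fun n ω => slope (fun u => Kproc B u ω) s (v n)) (fun n => ?_) ?_
    · simp only [slope_def_field]
      exact ((hKs (v n) ⟨(hv n).1.le, (hv n).2.le.trans hs.2⟩).sub (hKs s hs)).div_const _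
    · filter_upwards [ae_hasDerivAt_Kproc hcont hmaj hs0 (hsteep s hs)] with ω hω
      exact (hasDerivAt_iff_tendsto_slope.1 hω).comp
        (tendsto_nhdsWithin_iff.2 ⟨hvs, .of_forall fun n => (hv n).2.ne⟩)

theorem comap_Kproc_le (hcont : ∀ᵐ ω ∂P, ContinuousOn (fun u => B u ω) (Ici 0))
    (hmaj : ∀ᵐ ω ∂P, HasAffineMajorant fun u => B u ω)
    (ht : 0 ≤ t) (hsteep : ∀ᵐ ω ∂P, Steep (fun u => B u ω) t) (hB : natSigma B t ≤ nullAugment P m)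
    (hslope : MeasurableSpace.comap (Kslope B t) inferInstance ≤ nullAugment P m) :
    MeasurableSpace.comap (Kproc B t) inferInstance ≤ nullAugment P m := by
  rw [← measurable_iff_comap_le] at hslope ⊢
  have hBu := natSigma_le_iff.1 hB
  rcases ht.eq_or_lt with rfl | ht
  · exact EventuallyMeasurable.congr (hBu 0 ⟨le_rfl, le_rfl⟩) (Kproc_zero_ae_eq hcont hmaj)
  refine measurable_of_Iic (mδ := nullAugment P m) fun r => ?_
  have hset : MeasurableSet[nullAugment P m]
      {ω | ∀ u : Icc 0 t, B u ω + Kslope B t ω * (t - u) ≤ r} := by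
    refine measurableSet_nullAugment_forall_le
      (fun u : Icc 0 t => (hBu u u.2).add (hslope.mul_const (t - u))) ?_ r
    filter_upwards [hcont] with ω hω
    exact (hω.mono Icc_subset_Ici_self).domRestrict.add (by fun_prop)
  refine EventuallyMeasurableSet.congr hset (eventuallyEq_set.2 ?_)
  filter_upwards [hcont, hmaj, ae_hasDerivAt_Kproc hcont hmaj ht hsteep] with ω hcontω hmajω hderiv
  have := isLUB_le_iff (b := r) (hmajω.isLUB_concaveMajorant (hcontω 0 self_mem_Ici) ht hderiv)
  rw [mem_upperBounds, forall_mem_image] at this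
  simp only [mem_preimage, mem_Iic, Subtype.forall]
  exact this

theorem natSigma_Kproc_le_of_natSigma_Kslope_le (hinit : ∀ᵐ ω ∂P, B 0 ω = 0)
    (hcont : ∀ᵐ ω ∂P, ContinuousOn (fun u => B u ω) (Ici 0))
    (hmaj : ∀ᵐ ω ∂P, HasAffineMajorant fun u => B u ω)
    (hslope : natSigma (Kslope B) t ≤ nullAugment P m) :
    natSigma (Kproc B) t ≤ nullAugment P m := by
  refine natSigma_le_iff.2 fun s hs => ?_
  have hzero : Kproc B 0 =ᵐ[P] fun _ => 0 := (Kproc_zero_ae_eq hcont hmaj).trans hinit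
  rcases hs.1.eq_or_lt with rfl | hs0
  · exact EventuallyMeasurable.congr measurable_const hzero
  refine measurable_nullAugment_of_tendsto (f := fun n ω => ∑ i ∈ Finset.range (n + 1),
    Kslope B ((i + 1 : ℕ) * (s / (n + 1 : ℕ))) ω * (s / (n + 1 : ℕ))) (fun n => ?_) ?_
  · refine Finset.measurable_fun_sum _ fun i hi => Measurable.mul_const
      (natSigma_le_iff.1 hslope _ ⟨by positivity, le_trans ?_ hs.2⟩) _
    have hin : ((i + 1 : ℕ) : ℝ) ≤ (n + 1 : ℕ) := by exact_mod_cast Finset.mem_range.1 hi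
    calc (i + 1 : ℕ) * (s / (n + 1 : ℕ)) ≤ (n + 1 : ℕ) * (s / (n + 1 : ℕ)) := by gcongr
      _ = s := by field_simp
  · filter_upwards [hcont, hmaj, hzero] with ω hcontω hmajω hzeroω
    have := tendsto_sum_rightDeriv hmajω.concaveOn_concaveMajorant
      (hmajω.continuousWithinAt_concaveMajorant_zero (hcontω 0 self_mem_Ici)) hs0
    rwa [show concaveMajorant (fun u => B u ω) 0 = 0 from hzeroω, sub_zero] at this

end Generation

/-! ### Gaussian estimates -/

section Gaussian

open scoped NNReal

theorem gaussianReal_Iic_sqrt_mul {v : ℝ≥0} (hv : v ≠ 0) (c : ℝ) :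
    gaussianReal 0 v (Iic (√v * c)) = gaussianReal 0 1 (Iic c) := by
  have hscale : (gaussianReal 0 1).map (√(v : ℝ) * ·) = gaussianReal 0 v := by
    rw [gaussianReal_map_const_mul, mul_zero, mul_one]
    congr
    exact Real.sq_sqrt v.2
  rw [← hscale, Measure.map_apply (by fun_prop) measurableSet_Iic]
  congr 1 with x
  exact mul_le_mul_iff_right₀ (Real.sqrt_pos.2 (NNReal.coe_pos.2 (pos_iff_ne_zero.2 hv)))

theorem gaussianReal_Iic_lt_one (μ : ℝ) {v : ℝ≥0} (hv : v ≠ 0) (c : ℝ) :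
    gaussianReal μ v (Iic c) < 1 := by
  refine prob_le_one.lt_of_ne fun hone => ?_
  have hnull : volume (Iic c)ᶜ = 0 := gaussianReal_absolutelyContinuous' μ hv
    ((prob_compl_eq_zero_iff measurableSet_Iic).2 hone)
  simp at hnull

theorem gaussianReal_Iic_neg_le (v : ℝ≥0) {c : ℝ} (hc : 0 < c) :
    gaussianReal 0 v (Iic (-c)) ≤ ENNReal.ofReal (v / c ^ 2) := by
  have hcheb := meas_ge_le_variance_div_sq
    (memLp_id_gaussianReal' (μ := 0) (v := v) 2 ENNReal.ofNat_ne_top) hc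
  rw [variance_id_gaussianReal] at hcheb
  refine (measure_mono fun x (hx : x ≤ -c) => ?_).trans hcheb
  simp only [id_eq, integral_id_gaussianReal, sub_zero, mem_ofPred_eq]
  exact le_abs.2 (.inr (le_neg.2 hx))

end Gaussian

/-! ### Measure-theoretic limits and the maximal inequality -/

section MaximalInequality

variable {Ω : Type*} [mΩ : MeasurableSpace Ω] {P : Measure Ω}

theorem measure_le_of_ae_eventually_mem {E : ℕ → Set Ω} {A : Set Ω} {c : ENNReal}
    (hE : ∀ n, P (E n) ≤ c) (hA : ∀ᵐ ω ∂P, ω ∈ A → ∀ᶠ n in atTop, ω ∈ E n) : P A ≤ c := by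
  have hmono : Monotone fun n => ⋂ m ≥ n, E m := fun n n' hn =>
    biInter_mono (fun m hm => le_trans hn hm) fun _ _ => le_rfl
  calc P A ≤ P (⋃ n, ⋂ m ≥ n, E m) := measure_mono_ae <| by
        filter_upwards [hA] with ω hω hωA
        obtain ⟨n, hn⟩ := eventually_atTop.1 (hω hωA)
        exact mem_iUnion.2 ⟨n, mem_iInter₂.2 hn⟩
    _ = ⨆ n, P (⋂ m ≥ n, E m) := hmono.measure_iUnion
    _ ≤ c := iSup_le fun n => (measure_mono (biInter_subset_of_mem le_rfl)).trans (hE n)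

theorem measure_iUnion_eq_zero_of_eventually_le [IsFiniteMeasure P] {A : ℕ → Set Ω}
    (hA : Monotone A) {γ : ENNReal} (hγ : γ < 1) {ε : ℕ → ℕ → ENNReal}
    (hε : ∀ m, Tendsto (ε m) atTop (𝓝 0))
    (hle : ∀ m, ∀ᶠ n in atTop, P (A m) ≤ P (A n) * γ + ε m n) : P (⋃ n, A n) = 0 := by
  have hlim (m : ℕ) : Tendsto (fun n => P (A n) * γ + ε m n) atTop (𝓝 (P (⋃ n, A n) * γ)) := by
    simpa using (ENNReal.Tendsto.mul_const (tendsto_measure_iUnion_atTop hA)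
      (.inr hγ.ne_top)).add (hε m)
  have hcontract : P (⋃ n, A n) ≤ P (⋃ n, A n) * γ :=
    hA.measure_iUnion.trans_le (iSup_le fun m => ge_of_tendsto (hlim m) (hle m))
  by_contra hne
  have hlt := ENNReal.mul_lt_mul_right hne (measure_ne_top P _) hγ
  rw [mul_one] at hlt
  exact hlt.not_ge hcontract

theorem integral_posPart_le_sqrt [IsProbabilityMeasure P] {Y : Ω → ℝ} (hY : MemLp Y 2 P) :
    ∫ ω, (Y ω)⁺ ∂P ≤ √(∫ ω, Y ω ^ 2 ∂P) := by
  have hYint := hY.integrable one_le_two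
  have hvar := variance_nonneg |Y| P
  rw [variance_eq_sub hY.abs, sub_nonneg] at hvar
  calc ∫ ω, (Y ω)⁺ ∂P ≤ ∫ ω, |Y ω| ∂P :=
        integral_mono hYint.pos_part hYint.abs fun ω => sup_le (le_abs_self _) (abs_nonneg _)
    _ ≤ √(∫ ω, Y ω ^ 2 ∂P) := by
        refine Real.le_sqrt_of_sq_le ?_
        simpa only [Pi.abs_apply, Pi.pow_apply, sq_abs] using hvar

theorem ofReal_mul_measure_exists_le_le [IsProbabilityMeasure P] {ℱ : Filtration ℕ mΩ}
    {f : ℕ → Ω → ℝ} (hf : Submartingale f ℱ P) {N : ℕ} (hfN : MemLp (f N) 2 P) (r : ℝ) :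
    ENNReal.ofReal r * P {ω | ∃ k ≤ N, r ≤ f k ω} ≤ ENNReal.ofReal √(∫ ω, f N ω ^ 2 ∂P) := by
  set S := {ω | (r.toNNReal : ℝ) ≤
    (Finset.range (N + 1)).sup' Finset.nonempty_range_add_one fun k => f⁺ k ω} with hS
  have hsub : {ω | ∃ k ≤ N, r ≤ f k ω} ⊆ S := by
    rintro ω ⟨k, hkN, hk⟩
    simp only [hS, mem_ofPred_eq, Finset.le_sup'_iff]
    exact ⟨k, Finset.mem_range.2 (Nat.lt_succ_of_le hkN), max_le_max hk le_rfl⟩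
  calc ENNReal.ofReal r * P {ω | ∃ k ≤ N, r ≤ f k ω} ≤ r.toNNReal * P S := by
        gcongr
        rfl
    _ ≤ ENNReal.ofReal (∫ ω in S, f⁺ N ω ∂P) := maximal_ineq hf.pos (posPart_nonneg f) N
    _ ≤ ENNReal.ofReal (∫ ω, f⁺ N ω ∂P) := by
        refine ENNReal.ofReal_le_ofReal (setIntegral_le_integral (hf.pos.integrable N) ?_)
        exact ae_of_all _ fun ω => posPart_nonneg (f N ω)
    _ ≤ ENNReal.ofReal √(∫ ω, f N ω ^ 2 ∂P) := by
        gcongr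
        exact integral_posPart_le_sqrt hfN

end MaximalInequality

theorem exists_seq_div_mul_tendsto {t u : ℝ} (hu : u ∈ Icc 0 t) :
    ∃ k : ℕ → ℕ, (∀ N, k N ≤ N) ∧ Tendsto (fun N : ℕ => (k N / N * t : ℝ)) atTop (𝓝 u) := by
  have hut : u / t * t = u := div_mul_cancel_of_imp fun h => le_antisymm (h ▸ hu.2) hu.1
  refine ⟨fun N => ⌊u / t * N⌋₊, fun N => Nat.floor_le_of_le ?_, ?_⟩
  · exact mul_le_of_le_one_left N.cast_nonneg (div_le_one_of_le₀ hu.2 (hu.1.trans hu.2))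
  · have := ((tendsto_nat_floor_mul_div_atTop (div_nonneg hu.1 (hu.1.trans hu.2))).comp
      tendsto_natCast_atTop_atTop).mul_const t
    rwa [hut] at this

theorem hasAffineMajorant_of_eventually_le_pow {f : ℝ → ℝ}
    (hf : ∀ᶠ n : ℕ in atTop, ∀ u ∈ Icc (0 : ℝ) (4 ^ n), f u ≤ 4 ^ n) : HasAffineMajorant f := by
  obtain ⟨n₀, hn₀⟩ := eventually_atTop.1 hf
  have hpos : (0 : ℝ) < 4 ^ n₀ := by positivity
  refine ⟨4 ^ n₀, 4, fun u hu => ?_⟩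
  rcases le_total u (4 ^ n₀) with hsmall | hlarge
  · linarith [hn₀ n₀ le_rfl u ⟨hu, hsmall⟩]
  · obtain ⟨n, hnu, hun⟩ := exists_nat_pow_near ((one_le_pow₀ (by simp)).trans hlarge)
      (show (1 : ℝ) < 4 by norm_num)
    have hn : n₀ ≤ n + 1 := ((pow_lt_pow_iff_right₀ (by norm_num)).1 (hlarge.trans_lt hun)).le
    linarith [hn₀ (n + 1) hn u ⟨hu, hun.le⟩, pow_succ (4 : ℝ) n]

/-! ### Brownian paths -/

namespace IsBrownianMotion

variable {Ω : Type*} [mΩ : MeasurableSpace Ω] {P : Measure Ω} {B : ℝ → Ω → ℝ} {s t : ℝ}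

theorem hasLaw_sub (hB : IsBrownianMotion P B) (hs : 0 ≤ s) (hst : s ≤ t) :
    HasLaw (B t - B s) (gaussianReal 0 (t - s).toNNReal) P :=
  ⟨((hB.measurable t).sub (hB.measurable s)).aemeasurable, hB.incr_law s t hs hst⟩

theorem hasLaw (hB : IsBrownianMotion P B) (ht : 0 ≤ t) :
    HasLaw (B t) (gaussianReal 0 t.toNNReal) P := by
  have hlaw := hB.hasLaw_sub le_rfl ht
  rw [sub_zero] at hlaw
  refine hlaw.congr ?_
  filter_upwards [hB.init] with ω hω
  rw [Pi.sub_apply, hω, sub_zero]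

theorem isProbabilityMeasure (hB : IsBrownianMotion P B) : IsProbabilityMeasure P :=
  (hB.hasLaw le_rfl).isProbabilityMeasure

theorem natSigma_le (hB : IsBrownianMotion P B) (t : ℝ) : natSigma B t ≤ mΩ :=
  natSigma_le_iff.2 fun u _ => hB.measurable u

theorem memLp_two (hB : IsBrownianMotion P B) (ht : 0 ≤ t) : MemLp (B t) 2 P :=
  (hB.hasLaw ht).hasGaussianLaw.memLp_two

theorem integral_sq (hB : IsBrownianMotion P B) (ht : 0 ≤ t) : ∫ ω, B t ω ^ 2 ∂P = t := by
  have hlaw := hB.hasLaw ht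
  have hvar : Var[B t; P] = t := by
    rw [hlaw.variance_eq, variance_id_gaussianReal, Real.coe_toNNReal t ht]
  rwa [variance_of_integral_eq_zero hlaw.aemeasurable
    (hlaw.integral_eq.trans integral_id_gaussianReal)] at hvar

theorem condExp_natSigma (hB : IsBrownianMotion P B) (hs : 0 ≤ s) (hst : s ≤ t) :
    P[B t | natSigma B s] =ᵐ[P] B s := by
  have := hB.isProbabilityMeasure
  have hBs : Integrable (B s) P := (hB.memLp_two hs).integrable one_le_two
  have hBt : Integrable (B t) P := (hB.memLp_two (hs.trans hst)).integrable one_le_two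
  have hzero : P[B t - B s | natSigma B s] =ᵐ[P] fun _ => 0 := by
    have hincr := condExp_indep_eq ((hB.measurable t).sub (hB.measurable s)).comap_le
      (hB.natSigma_le s) (comap_measurable _).stronglyMeasurable (hB.incr_indep s t hs hst)
    rwa [(hB.hasLaw_sub hs hst).integral_eq, integral_id_gaussianReal] at hincr
  have hself : P[B s | natSigma B s] = B s := condExp_of_stronglyMeasurable (hB.natSigma_le s)
    (measurable_natSigma ⟨hs, le_rfl⟩).stronglyMeasurable hBs
  filter_upwards [condExp_sub hBt hBs (natSigma B s), hzero] with ω hsub hω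
  rw [hω, Pi.sub_apply, hself] at hsub
  linarith

/-- The natural filtration of a Brownian motion along the times `τ i`. -/
def sampledFiltration {ι : Type*} [Preorder ι] (hB : IsBrownianMotion P B) {τ : ι → ℝ}
    (hτ : Monotone τ) : Filtration ι mΩ where
  seq i := natSigma B (τ i)
  mono' _ _ hij := natSigma_mono B (hτ hij)
  le' _ := hB.natSigma_le _

theorem martingale_sampled {ι : Type*} [Preorder ι] (hB : IsBrownianMotion P B) {τ : ι → ℝ}
    (hτ : Monotone τ) (hτ₀ : ∀ i, 0 ≤ τ i) :
    Martingale (fun i => B (τ i)) (hB.sampledFiltration hτ) P :=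
  ⟨fun i => (measurable_natSigma ⟨hτ₀ i, le_rfl⟩).stronglyMeasurable,
    fun i _ hij => hB.condExp_natSigma (hτ₀ i) (hτ hij)⟩

theorem ofReal_mul_measure_exists_lt_le (hB : IsBrownianMotion P B) (ht : 0 ≤ t) (r : ℝ) :
    ENNReal.ofReal r * P {ω | ∃ u ∈ Icc 0 t, r < B u ω} ≤ ENNReal.ofReal √t := by
  have := hB.isProbabilityMeasure
  have hgrid (N : ℕ) : ENNReal.ofReal r * P {ω | ∃ k ≤ N, r ≤ B (k / N * t) ω} ≤
      ENNReal.ofReal √t := by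
    have hτ : Monotone fun k : ℕ => (k / N * t : ℝ) := fun k l hkl => by dsimp only; gcongr
    have hτ₀ (k : ℕ) : (0 : ℝ) ≤ k / N * t := by positivity
    refine (ofReal_mul_measure_exists_le_le (hB.martingale_sampled hτ hτ₀).submartingale
      (hB.memLp_two (hτ₀ N)) r).trans ?_
    rw [hB.integral_sq (hτ₀ N)]
    gcongr
    exact mul_le_of_le_one_left ht (div_self_le_one (N : ℝ))
  refine measure_le_of_ae_eventually_mem (P := ENNReal.ofReal r • P) hgrid
    (Measure.ae_smul_measure ?_ _)
  filter_upwards [hB.cont] with ω hcont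
  rintro ⟨u, hu, hru⟩
  obtain ⟨k, hkN, hk⟩ := exists_seq_div_mul_tendsto hu
  have hlim := (hcont u hu.1).tendsto.comp
    (tendsto_nhdsWithin_iff.2 ⟨hk, .of_forall fun N => mem_Ici.2 (by positivity)⟩)
  filter_upwards [hlim.eventually (lt_mem_nhds hru)] with N hN using ⟨k N, hkN N, hN.le⟩

theorem ae_hasAffineMajorant (hB : IsBrownianMotion P B) :
    ∀ᵐ ω ∂P, HasAffineMajorant fun u => B u ω := by
  have hbound (n : ℕ) : P {ω | ∃ u ∈ Icc (0 : ℝ) (4 ^ n), 4 ^ n < B u ω}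
      ≤ ENNReal.ofReal ((1 / 2) ^ n) := by
    have hmax := hB.ofReal_mul_measure_exists_lt_le (t := 4 ^ n) (by positivity) (4 ^ n)
    have hsqrt : √((4 : ℝ) ^ n) = 4 ^ n * (1 / 2) ^ n := by
      rw [← mul_pow, Real.sqrt_eq_iff_eq_sq (by positivity) (by positivity), ← pow_mul, mul_comm n,
        pow_mul]
      norm_num
    rw [hsqrt, ENNReal.ofReal_mul (by positivity)] at hmax
    exact (ENNReal.mul_le_mul_iff_right (by positivity) ENNReal.ofReal_ne_top).1 hmax
  have hsum : ∑' n : ℕ, P {ω | ∃ u ∈ Icc (0 : ℝ) (4 ^ n), 4 ^ n < B u ω} ≠ ⊤ :=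
    ne_top_of_le_ne_top summable_geometric_two.tsum_ofReal_ne_top (ENNReal.tsum_le_tsum hbound)
  filter_upwards [ae_eventually_notMem hsum] with ω hω
  refine hasAffineMajorant_of_eventually_le_pow (hω.mono fun n hn u hu => ?_)
  exact not_lt.1 fun hlt => hn ⟨u, hu, hlt⟩

theorem measure_sub_le_neg_le (hB : IsBrownianMotion P B) (hs : 0 ≤ s) (hst : s ≤ t) {c : ℝ}
    (hc : 0 < c) : P {ω | B t ω - B s ω ≤ -c} ≤ ENNReal.ofReal ((t - s) / c ^ 2) :=
  calc P {ω | B t ω - B s ω ≤ -c} = gaussianReal 0 (t - s).toNNReal (Iic (-c)) :=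
        (hB.hasLaw_sub hs hst).measure_eq measurableSet_Iic
    _ ≤ ENNReal.ofReal ((t - s).toNNReal / c ^ 2) := gaussianReal_Iic_neg_le _ hc
    _ = ENNReal.ofReal ((t - s) / c ^ 2) := by rw [Real.coe_toNNReal _ (sub_nonneg.2 hst)]

theorem measure_inter_sub_le (hB : IsBrownianMotion P B) (hs : 0 ≤ s) (hst : s < t) {E : Set Ω}
    (hE : MeasurableSet[natSigma B s] E) (c : ℝ) :
    P (E ∩ {ω | B t ω - B s ω ≤ √(t - s) * c}) = P E * gaussianReal 0 1 (Iic c) := by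
  have hindep := (Indep_iff _ _ _).1 (hB.incr_indep s t hs hst.le)
    {ω | B t ω - B s ω ≤ √(t - s) * c} E ⟨Iic (√(t - s) * c), measurableSet_Iic, rfl⟩ hE
  have hlaw : P {ω | B t ω - B s ω ≤ √(t - s) * c} = gaussianReal 0 1 (Iic c) :=
    calc P {ω | B t ω - B s ω ≤ √(t - s) * c}
        = gaussianReal 0 (t - s).toNNReal (Iic (√(t - s) * c)) :=
          (hB.hasLaw_sub hs hst.le).measure_eq measurableSet_Iic
      _ = gaussianReal 0 1 (Iic c) := by
        rw [← gaussianReal_Iic_sqrt_mul (Real.toNNReal_pos.2 (sub_pos.2 hst)).ne',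
          Real.coe_toNNReal _ (sub_nonneg.2 hst.le)]
  rw [inter_comm, hindep, hlaw, mul_comm]

/-- Unless `B` drops by `√h` on `[t, t + s]`, a rise of at most `√h` on `[t, t + h]` leaves a rise
of at most `2√h ≤ 3√(h - s)` on `[t + s, t + h]`. -/
theorem measure_inter_sub_le_sqrt_le (hB : IsBrownianMotion P B) {h : ℝ} (ht : 0 ≤ t) (hs : 0 < s)
    (hsh : 2 * s ≤ h) {E : Set Ω} (hE : MeasurableSet[natSigma B (t + s)] E) :
    P (E ∩ {ω | B (t + h) ω - B t ω ≤ √h}) ≤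
      P E * gaussianReal 0 1 (Iic 3) + ENNReal.ofReal (s / h) := by
  have hh : 0 < h := by linarith
  have hdrop := hB.measure_sub_le_neg_le ht (le_add_of_nonneg_right hs.le) (Real.sqrt_pos.2 hh)
  have hrise := hB.measure_inter_sub_le (t := t + h) (by positivity) (by linarith) hE 3
  rw [add_sub_cancel_left, Real.sq_sqrt hh.le] at hdrop
  rw [add_sub_add_left_eq_sub] at hrise
  have hsqrt : 2 * √h ≤ √(h - s) * 3 := by
    rw [← sq_le_sq₀ (by positivity) (by positivity), mul_pow, mul_pow, Real.sq_sqrt hh.le,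
      Real.sq_sqrt (by linarith)]
    linarith
  rw [← hrise]
  refine (measure_mono ?_).trans ((measure_union_le _ _).trans (add_le_add_right hdrop _))
  rintro ω ⟨hωE, hω⟩
  simp only [mem_ofPred_eq, mem_union, mem_inter_iff] at hω ⊢
  by_contra! hcon
  linarith [hcon.1 hωE]

theorem ae_frequently_sqrt_lt_sub (hB : IsBrownianMotion P B) (ht : 0 ≤ t) {h : ℕ → ℝ}
    (hanti : Antitone h) (hpos : ∀ n, 0 < h n) (hlim : Tendsto h atTop (𝓝 0)) :
    ∀ᵐ ω ∂P, ∃ᶠ n in atTop, √(h n) < B (t + h n) ω - B t ω := by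
  have := hB.isProbabilityMeasure
  let A (n : ℕ) : Set Ω := ⋂ j ≥ n, {ω | B (t + h j) ω - B t ω ≤ √(h j)}
  have hA (n : ℕ) : MeasurableSet[natSigma B (t + h n)] (A n) := by
    refine MeasurableSet.iInter fun j => .iInter fun hj => ?_
    have hBt : Measurable[natSigma B (t + h n)] (B t) :=
      measurable_natSigma ⟨ht, le_add_of_nonneg_right (hpos n).le⟩
    have hBj : Measurable[natSigma B (t + h n)] (B (t + h j)) :=
      measurable_natSigma ⟨add_nonneg ht (hpos j).le, add_le_add_right (hanti hj) t⟩
    exact hBj.sub hBt measurableSet_Iic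
  have hmono : Monotone A := fun n n' hn =>
    biInter_mono (fun j hj => le_trans hn hj) fun _ _ => le_rfl
  have hratio (m : ℕ) : Tendsto (fun n => ENNReal.ofReal (h n / h m)) atTop (𝓝 0) := by
    simpa using ENNReal.tendsto_ofReal (hlim.div_const (h m))
  have hstep (m : ℕ) : ∀ᶠ n in atTop,
      P (A m) ≤ P (A n) * gaussianReal 0 1 (Iic 3) + ENNReal.ofReal (h n / h m) := by
    filter_upwards [hlim.eventually (gt_mem_nhds (half_pos (hpos m))), eventually_ge_atTop m]
      with n hn hmn
    calc P (A m) ≤ P (A n ∩ {ω | B (t + h m) ω - B t ω ≤ √(h m)}) :=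
          measure_mono (subset_inter (hmono hmn) (biInter_subset_of_mem (le_refl m)))
      _ ≤ P (A n) * gaussianReal 0 1 (Iic 3) + ENNReal.ofReal (h n / h m) :=
          hB.measure_inter_sub_le_sqrt_le ht (hpos n) (by linarith) (hA n)
  have hnull : P (⋃ n, A n) = 0 := measure_iUnion_eq_zero_of_eventually_le hmono
    (gaussianReal_Iic_lt_one 0 one_ne_zero 3) hratio hstep
  filter_upwards [measure_eq_zero_iff_ae_notMem.1 hnull] with ω hω
  refine frequently_atTop.2 fun n => ?_
  by_contra! hcon
  exact hω (mem_iUnion.2 ⟨n, mem_iInter₂.2 hcon⟩)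

theorem ae_steep (hB : IsBrownianMotion P B) (ht : 0 ≤ t) :
    ∀ᵐ ω ∂P, Steep (fun u => B u ω) t := by
  obtain ⟨h, hanti, hpos, hlim⟩ := exists_seq_strictAnti_tendsto (0 : ℝ)
  filter_upwards [hB.ae_frequently_sqrt_lt_sub ht hanti.antitone hpos hlim] with ω hω M
  have hsqrt : ∀ᶠ n in atTop, M * √(h n) ≤ 1 := by
    have : Tendsto (fun n => M * √(h n)) atTop (𝓝 0) := by simpa using hlim.sqrt.const_mul M
    exact this.eventually (ge_mem_nhds one_pos)
  obtain ⟨n, hn, hMn⟩ := (hω.and_eventually hsqrt).exists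
  have hle : M * h n ≤ √(h n) := calc
    M * h n = M * √(h n) * √(h n) := by rw [mul_assoc, Real.mul_self_sqrt (hpos n).le]
    _ ≤ √(h n) := mul_le_of_le_one_left (Real.sqrt_nonneg _) hMn
  exact ⟨h n, hpos n, by linarith⟩

end IsBrownianMotion

theorem filtration_identities_general {Ω : Type*} [MeasurableSpace Ω] (P : Measure Ω)
    (B : ℝ → Ω → ℝ) (hinit : ∀ᵐ ω ∂P, B 0 ω = 0)
    (hcont : ∀ᵐ ω ∂P, ContinuousOn (fun u => B u ω) (Ici 0))
    (hmaj : ∀ᵐ ω ∂P, HasAffineMajorant fun u => B u ω)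
    (t : ℝ) (ht : 0 ≤ t)
    (hsteep : ∀ s ∈ Icc 0 t, ∀ᵐ ω ∂P, Steep (fun u => B u ω) s) :
    SigmaEqModNull P
      (natSigma (fun u ω => Kproc B u ω - B u ω) t ⊔ natSigma (Kslope B) t)
      (natSigma B t ⊔ natSigma (Kproc B) t) ∧
    SigmaEqModNull P
      (natSigma B t ⊔ natSigma (Kproc B) t)
      (natSigma B t ⊔ MeasurableSpace.comap (Kproc B t) inferInstance) ∧
    SigmaEqModNull P
      (natSigma B t ⊔ MeasurableSpace.comap (Kproc B t) inferInstance)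
      (natSigma B t ⊔ MeasurableSpace.comap (Kslope B t) inferInstance) ∧
    SigmaLeModNull P
      (natSigma (Xproc B) t ⊔ MeasurableSpace.comap (Kproc B t) inferInstance
        ⊔ MeasurableSpace.comap (Kslope B t) inferInstance)
      (natSigma B t ⊔ natSigma (Kproc B) t) := by
  have hcomap {Y : ℝ → Ω → ℝ} : MeasurableSpace.comap (Y t) inferInstance ≤ natSigma Y t :=
    measurable_iff_comap_le.1 (measurable_natSigma ⟨ht, le_rfl⟩)
  have hslope := natSigma_Kslope_le hcont hmaj hsteep
    (le_nullAugment_sup_right (m₁ := natSigma B t))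
  have hK_of_Kt := natSigma_Kproc_le (t := t) hcont hmaj
    le_nullAugment_sup_left le_nullAugment_sup_right
  have hKt_of_slope := comap_Kproc_le hcont hmaj ht (hsteep t ⟨ht, le_rfl⟩)
    le_nullAugment_sup_left le_nullAugment_sup_right
  have hK_of_slopes := natSigma_Kproc_le_of_natSigma_Kslope_le (t := t) hinit hcont hmaj
    (le_nullAugment_sup_right (m₁ := natSigma (fun u ω => Kproc B u ω - B u ω) t))
  have hB_of_slopes : natSigma B t ≤ nullAugment P
      (natSigma (fun u ω => Kproc B u ω - B u ω) t ⊔ natSigma (Kslope B) t) := by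
    simpa only [Pi.sub_apply, sub_sub_cancel] using
      natSigma_comp_le (measurable_fst.sub measurable_snd) hK_of_slopes le_nullAugment_sup_left
  simp only [SigmaEqModNull, sigmaLeModNull_iff]
  refine ⟨⟨sup_le ?_ hslope, sup_le hB_of_slopes hK_of_slopes⟩,
    ⟨sup_le le_nullAugment_sup_left hK_of_Kt,
      sup_le le_nullAugment_sup_left (hcomap.trans le_nullAugment_sup_right)⟩,
    ⟨sup_le le_nullAugment_sup_left hKt_of_slope,
      sup_le le_nullAugment_sup_left
        (hcomap.trans (natSigma_Kslope_le hcont hmaj hsteep hK_of_Kt))⟩,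
    sup_le (sup_le ?_ (hcomap.trans le_nullAugment_sup_right)) (hcomap.trans hslope)⟩
  · exact natSigma_comp_le (measurable_fst.sub measurable_snd)
      le_nullAugment_sup_right le_nullAugment_sup_left
  · exact natSigma_comp_le ((measurable_fst.const_mul 2).sub measurable_snd)
      le_nullAugment_sup_right le_nullAugment_sup_left

/-- For every `t ≥ 0`, up to `P`-negligible sets:
`𝓕_t^{K-B} ∨ 𝓕_t^{K'} = 𝓕_t^B ∨ 𝓕_t^K = 𝓕_t^B ∨ σ(K(t)) = 𝓕_t^B ∨ σ(K'(t))`, and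
`𝓕_t^X ∨ σ(K(t)) ∨ σ(K'(t)) ⊆ 𝓕_t^B ∨ 𝓕_t^K`. -/
theorem filtration_identities {Ω : Type*} [MeasurableSpace Ω]
    (P : Measure Ω) [IsProbabilityMeasure P] (B : ℝ → Ω → ℝ)
    (hB : IsBrownianMotion P B) (t : ℝ) (ht : 0 ≤ t) :
    SigmaEqModNull P
      (natSigma (fun u ω => Kproc B u ω - B u ω) t ⊔ natSigma (Kslope B) t)
      (natSigma B t ⊔ natSigma (Kproc B) t) ∧
    SigmaEqModNull P
      (natSigma B t ⊔ natSigma (Kproc B) t)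
      (natSigma B t ⊔ MeasurableSpace.comap (Kproc B t) inferInstance) ∧
    SigmaEqModNull P
      (natSigma B t ⊔ MeasurableSpace.comap (Kproc B t) inferInstance)
      (natSigma B t ⊔ MeasurableSpace.comap (Kslope B t) inferInstance) ∧
    SigmaLeModNull P
      (natSigma (Xproc B) t ⊔ MeasurableSpace.comap (Kproc B t) inferInstance
        ⊔ MeasurableSpace.comap (Kslope B t) inferInstance)
      (natSigma B t ⊔ natSigma (Kproc B) t) :=
  filtration_identities_general P B hB.init hB.cont hB.ae_hasAffineMajorant t ht
    fun _ hs => hB.ae_steep hs.1
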